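/- (Syzygy criterion) Let a ∈ R^m be nonzero and let G ⊆ R^m be a signature Gröbner basis up to 𝔰(a). If 𝔰(a) is a syzygy signature, then a regular s-reduces to zero modulo G, i.e., there is a finite sequence of regular s-reduction steps leading from a to some b with ‾b = 0. -/

import Mathlib

namespace SigGB

noncomputable section

/-- Power-products in `n` indeterminates, written additively as exponent vectors
(so the power-product `1` is `0`, and multiplication of power-products is `+`). -/
abbrev PP (n : ℕ) : Type := Fin n →₀ ℕ

/-- Terms: a power-product together with a component index (`t·e_i ↝ (t, i)`). -/
abbrev Term (n m : ℕ) : Type := PP n × Fin m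

/-- Multiplication of a term by a power-product: `t ⊗ (s·e_i) = (t·s)·e_i`. -/
def mulTerm {n m : ℕ} (t : PP n) (u : Term n m) : Term n m := (t + u.1, u.2)

/-- Divisibility of terms: `u ∣ v` iff `v = t ⊗ u` for some power-product `t`. -/
def termDvd {n m : ℕ} (u v : Term n m) : Prop := ∃ t : PP n, v = mulTerm t u

/-- Componentwise lcm of power-products. -/
noncomputable def lcmPP {n : ℕ} (s t : PP n) : PP n := Finsupp.zipWith max (max_self 0) s t

/-- Strict part of a relation. -/
def strict {α : Type*} (r : α → α → Prop) (x y : α) : Prop := r x y ∧ x ≠ y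

/-- `ple` is an admissible order on power-products and `tle` is a compatible
linear order on terms. -/
structure OrdersOK {n m : ℕ} (ple : PP n → PP n → Prop)
    (tle : Term n m → Term n m → Prop) : Prop where
  ple_refl : ∀ t, ple t t
  ple_trans : ∀ s t u, ple s t → ple t u → ple s u
  ple_antisymm : ∀ s t, ple s t → ple t s → s = t
  ple_total : ∀ s t, ple s t ∨ ple t s
  ple_one_le : ∀ t, ple 0 t
  ple_mul : ∀ (t s₁ s₂ : PP n), ple s₁ s₂ → ple (t + s₁) (t + s₂)
  tle_refl : ∀ u, tle u u
  tle_trans : ∀ u v w, tle u v → tle v w → tle u w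
  tle_antisymm : ∀ u v, tle u v → tle v u → u = v
  tle_total : ∀ u v, tle u v ∨ tle v u
  tle_mul : ∀ (t : PP n) (u v : Term n m), tle u v → tle (mulTerm t u) (mulTerm t v)
  tle_compat : ∀ (s t : PP n) (i j : Fin m), ple s t → i ≤ j → tle (s, i) (t, j)

variable {K : Type*} [Field K] {n m : ℕ} [NeZero m]

variable (f : Fin m → MvPolynomial (Fin n) K)
variable (ple : PP n → PP n → Prop)
variable (tle : Term n m → Term n m → Prop)

/-- The module homomorphism `R^m → R` determined by `e_i ↦ f i`, i.e. `a ↦ ‾a`. -/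
def bar (a : Fin m → MvPolynomial (Fin n) K) : MvPolynomial (Fin n) K := ∑ i, a i * f i

/-- Multiplication of a module element by a coefficient `c` and a power-product `t`. -/
noncomputable def monomMul (c : K) (t : PP n) (a : Fin m → MvPolynomial (Fin n) K) :
    Fin m → MvPolynomial (Fin n) K :=
  fun i => MvPolynomial.monomial t c * a i

/-- The coefficient of a term in a module element. -/
def coeffM (a : Fin m → MvPolynomial (Fin n) K) (u : Term n m) : K :=
  MvPolynomial.coeff u.1 (a u.2)

open Classical in
/-- Leading power-product of a polynomial w.r.t. `ple`
(junk value `0`, i.e. the power-product `1`, for the zero polynomial). -/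
noncomputable def lp (p : MvPolynomial (Fin n) K) : PP n :=
  if h : ∃ t, MvPolynomial.coeff t p ≠ 0 ∧ ∀ s, MvPolynomial.coeff s p ≠ 0 → ple s t
  then h.choose else 0

/-- Leading coefficient of a polynomial w.r.t. `ple`. -/
noncomputable def lc (p : MvPolynomial (Fin n) K) : K := MvPolynomial.coeff (lp ple p) p

open Classical in
/-- Signature of a module element: its `tle`-largest term with nonzero coefficient
(junk value for `0`). -/
noncomputable def sig (a : Fin m → MvPolynomial (Fin n) K) : Term n m :=
  if h : ∃ u, coeffM a u ≠ 0 ∧ ∀ v, coeffM a v ≠ 0 → tle v u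
  then h.choose else ((0 : PP n), (0 : Fin m))

/-- Leading coefficient of a module element. -/
noncomputable def lcM (a : Fin m → MvPolynomial (Fin n) K) : K := coeffM a (sig tle a)

/-- One-step s-reduction of `a` to `b` modulo `G`, witnessed by `g ∈ G` and the
power-product `t`. -/
def RedStepWith (G : Set (Fin m → MvPolynomial (Fin n) K))
    (a b g : Fin m → MvPolynomial (Fin n) K) (t : PP n) : Prop :=
  g ∈ G ∧ bar f g ≠ 0 ∧
    MvPolynomial.coeff (t + lp ple (bar f g)) (bar f a) ≠ 0 ∧
    b = a - monomMul (MvPolynomial.coeff (t + lp ple (bar f g)) (bar f a) / lc ple (bar f g)) t g ∧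
    tle (mulTerm t (sig tle g)) (sig tle a)

/-- The step witnessed by `g` and `t` is regular: `t ⊗ 𝔰(g) ≺_t 𝔰(a)`. -/
def RegularWith (a g : Fin m → MvPolynomial (Fin n) K) (t : PP n) : Prop :=
  strict tle (mulTerm t (sig tle g)) (sig tle a)

/-- The step witnessed by `g` and `t` is top: `t·lp(‾g) = lp(‾a)`. -/
def TopWith (a g : Fin m → MvPolynomial (Fin n) K) (t : PP n) : Prop :=
  t + lp ple (bar f g) = lp ple (bar f a)

/-- `a` s-reduces to `b` modulo `G` in one step. -/
def SigRedStep (G : Set (Fin m → MvPolynomial (Fin n) K))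
    (a b : Fin m → MvPolynomial (Fin n) K) : Prop :=
  ∃ g t, RedStepWith f ple tle G a b g t

/-- `a` regular s-reduces to `b` modulo `G` in one step. -/
def RegRedStep (G : Set (Fin m → MvPolynomial (Fin n) K))
    (a b : Fin m → MvPolynomial (Fin n) K) : Prop :=
  ∃ g t, RedStepWith f ple tle G a b g t ∧ RegularWith tle a g t

/-- `a` regular top s-reduces to `b` modulo `G` in one step. -/
def RegTopRedStep (G : Set (Fin m → MvPolynomial (Fin n) K))
    (a b : Fin m → MvPolynomial (Fin n) K) : Prop :=
  ∃ g t, RedStepWith f ple tle G a b g t ∧ RegularWith tle a g t ∧ TopWith f ple a g t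

/-- `a` is regular s-irreducible modulo `G`. -/
def RegIrred (G : Set (Fin m → MvPolynomial (Fin n) K))
    (a : Fin m → MvPolynomial (Fin n) K) : Prop :=
  ∀ b, ¬ RegRedStep f ple tle G a b

/-- `a` is regular top s-irreducible modulo `G`. -/
def RegTopIrred (G : Set (Fin m → MvPolynomial (Fin n) K))
    (a : Fin m → MvPolynomial (Fin n) K) : Prop :=
  ∀ b, ¬ RegTopRedStep f ple tle G a b

/-- `a` s-reduces to zero modulo `G`. -/
def SigRedZero (G : Set (Fin m → MvPolynomial (Fin n) K))
    (a : Fin m → MvPolynomial (Fin n) K) : Prop :=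
  ∃ b, Relation.ReflTransGen (SigRedStep f ple tle G) a b ∧ bar f b = 0

/-- `a` regular s-reduces to zero modulo `G`. -/
def RegRedZero (G : Set (Fin m → MvPolynomial (Fin n) K))
    (a : Fin m → MvPolynomial (Fin n) K) : Prop :=
  ∃ b, Relation.ReflTransGen (RegRedStep f ple tle G) a b ∧ bar f b = 0

/-- `G` is a signature Gröbner basis in the term `u`. -/
def IsSigGBIn (G : Set (Fin m → MvPolynomial (Fin n) K)) (u : Term n m) : Prop :=
  ∀ a : Fin m → MvPolynomial (Fin n) K, a ≠ 0 → sig tle a = u → SigRedZero f ple tle G a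

/-- `G` is a signature Gröbner basis up to the term `u`. -/
def IsSigGBUpto (G : Set (Fin m → MvPolynomial (Fin n) K)) (u : Term n m) : Prop :=
  ∀ v, strict tle v u → IsSigGBIn f ple tle G v

/-- `u` is a syzygy signature. -/
def IsSyzSig (u : Term n m) : Prop :=
  ∃ a : Fin m → MvPolynomial (Fin n) K, a ≠ 0 ∧ sig tle a = u ∧ bar f a = 0

/-- The sig-poly-pair `(𝔰(a), ‾a)` of a module element `a`. -/
noncomputable def sppOf (a : Fin m → MvPolynomial (Fin n) K) :
    Term n m × MvPolynomial (Fin n) K :=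
  (sig tle a, bar f a)

/-- `x` is a sig-poly-pair. -/
def IsSPP (x : Term n m × MvPolynomial (Fin n) K) : Prop :=
  ∃ a : Fin m → MvPolynomial (Fin n) K, a ≠ 0 ∧ sppOf f tle a = x

/-- `ro` is a rewrite order. -/
def IsRewriteOrder
    (ro : Term n m × MvPolynomial (Fin n) K → Term n m × MvPolynomial (Fin n) K → Prop) :
    Prop :=
  (∀ x, IsSPP f tle x → ro x x) ∧
  (∀ x y z, IsSPP f tle x → IsSPP f tle y → IsSPP f tle z → ro x y → ro y z → ro x z) ∧
  (∀ x y, IsSPP f tle x → IsSPP f tle y → (ro x y ∨ ro y x)) ∧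
  (∀ x y, IsSPP f tle x → IsSPP f tle y → ro x y → ro y x → x.1 = y.1) ∧
  (∀ (G : Set (Fin m → MvPolynomial (Fin n) K)) (a b : Fin m → MvPolynomial (Fin n) K),
    IsSigGBUpto f ple tle G (sig tle b) → a ∈ G → b ∈ G → a ≠ 0 → b ≠ 0 →
    termDvd (sig tle a) (sig tle b) → RegTopIrred f ple tle G b →
    ro (sppOf f tle a) (sppOf f tle b))

/-- `a` is a canonical rewriter in the term `u` w.r.t. `G` (for the rewrite order `ro`). -/
def IsCanonRewriter
    (ro : Term n m × MvPolynomial (Fin n) K → Term n m × MvPolynomial (Fin n) K → Prop)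
    (G : Set (Fin m → MvPolynomial (Fin n) K)) (u : Term n m)
    (a : Fin m → MvPolynomial (Fin n) K) : Prop :=
  a ∈ G ∧ a ≠ 0 ∧ termDvd (sig tle a) u ∧
    ∀ g ∈ G, g ≠ 0 → termDvd (sig tle g) u → ro (sppOf f tle g) (sppOf f tle a)

/-- `G` is a rewrite basis in the term `u` (for the rewrite order `ro`). -/
def IsRBIn
    (ro : Term n m × MvPolynomial (Fin n) K → Term n m × MvPolynomial (Fin n) K → Prop)
    (G : Set (Fin m → MvPolynomial (Fin n) K)) (u : Term n m) : Prop :=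
  IsSyzSig f tle u ∨
    ∃ g, IsCanonRewriter f tle ro G u g ∧
      RegTopIrred f ple tle G (monomMul (1 : K) (u.1 - (sig tle g).1) g)

/-- `G` is a rewrite basis up to the term `u` (for the rewrite order `ro`). -/
def IsRBUpto
    (ro : Term n m × MvPolynomial (Fin n) K → Term n m × MvPolynomial (Fin n) K → Prop)
    (G : Set (Fin m → MvPolynomial (Fin n) K)) (u : Term n m) : Prop :=
  ∀ v, strict tle v u → IsRBIn f ple tle ro G v

/-- The S-pair of two module elements. -/
noncomputable def spair (a b : Fin m → MvPolynomial (Fin n) K) :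
    Fin m → MvPolynomial (Fin n) K :=
  monomMul ((1 : K) / lc ple (bar f a))
      (lcmPP (lp ple (bar f a)) (lp ple (bar f b)) - lp ple (bar f a)) a -
    monomMul ((1 : K) / lc ple (bar f b))
      (lcmPP (lp ple (bar f a)) (lp ple (bar f b)) - lp ple (bar f b)) b

/-- `a` and `b` give rise to a regular S-pair. -/
def IsRegularSPair (a b : Fin m → MvPolynomial (Fin n) K) : Prop :=
  bar f a ≠ 0 ∧ bar f b ≠ 0 ∧
    mulTerm (lcmPP (lp ple (bar f a)) (lp ple (bar f b)) - lp ple (bar f a)) (sig tle a) ≠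
      mulTerm (lcmPP (lp ple (bar f a)) (lp ple (bar f b)) - lp ple (bar f b)) (sig tle b)

/-- `B` is a Gröbner basis of the ideal `I` w.r.t. `ple`. -/
def IsGroebnerBasis (B : Set (MvPolynomial (Fin n) K)) (I : Ideal (MvPolynomial (Fin n) K)) :
    Prop :=
  (∀ b ∈ B, b ∈ I) ∧ Ideal.span B = I ∧
    ∀ p ∈ I, p ≠ 0 → ∃ b ∈ B, b ≠ 0 ∧ ∃ t : PP n, lp ple p = t + lp ple b

/-- One step of ordinary polynomial reduction of `p` to `q` modulo `B`. -/
def PolyRedStep (B : Set (MvPolynomial (Fin n) K)) (p q : MvPolynomial (Fin n) K) : Prop :=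
  ∃ r ∈ B, r ≠ 0 ∧ ∃ t : PP n, MvPolynomial.coeff (t + lp ple r) p ≠ 0 ∧
    q = p - MvPolynomial.monomial t (MvPolynomial.coeff (t + lp ple r) p / lc ple r) * r

/-!
Let `z` be a syzygy with `𝔰(z) = 𝔰(a)`. Cancelling the leading terms, `c = a - k • z` has `‾c = ‾a`
and is either `0` or of signature `≺_t 𝔰(a)`, so it s-reduces to zero modulo `G`. An s-reduction
step depends on its argument only through the polynomial part and the bound on signatures; hence the
steps taken by `c` can be applied to `a`, where they are regular because `𝔰(c) ≺_t 𝔰(a)`, and where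
they preserve the signature.
-/

section OrdersOK

omit [NeZero m]

variable {ple tle}

theorem OrdersOK.isLinearOrder_ple (hord : OrdersOK ple tle) : IsLinearOrder (PP n) ple where
  refl := hord.ple_refl
  trans := hord.ple_trans
  antisymm := hord.ple_antisymm
  total := hord.ple_total

theorem OrdersOK.isLinearOrder_tle (hord : OrdersOK ple tle) : IsLinearOrder (Term n m) tle where
  refl := hord.tle_refl
  trans := hord.tle_trans
  antisymm := hord.tle_antisymm
  total := hord.tle_total

theorem OrdersOK.covariantClass_mulTerm (hord : OrdersOK ple tle) :
    CovariantClass (PP n) (Term n m) mulTerm tle :=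
  ⟨fun t _ _ => hord.tle_mul t _ _⟩

end OrdersOK

section Coefficients

omit [NeZero m]

theorem bar_zero : bar f 0 = 0 := by
  simp only [bar, Pi.zero_apply, zero_mul, Finset.sum_const_zero]

theorem bar_sub (a b : Fin m → MvPolynomial (Fin n) K) : bar f (a - b) = bar f a - bar f b := by
  simp only [bar, Pi.sub_apply, sub_mul, Finset.sum_sub_distrib]

theorem bar_smul (k : K) (a : Fin m → MvPolynomial (Fin n) K) : bar f (k • a) = k • bar f a := by
  simp only [bar, Pi.smul_apply, smul_mul_assoc, Finset.smul_sum]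

theorem bar_monomMul (c : K) (t : PP n) (a : Fin m → MvPolynomial (Fin n) K) :
    bar f (monomMul c t a) = MvPolynomial.monomial t c * bar f a := by
  simp only [bar, monomMul, Finset.mul_sum, mul_assoc]

theorem coeffM_zero (u : Term n m) : coeffM (0 : Fin m → MvPolynomial (Fin n) K) u = 0 :=
  MvPolynomial.coeff_zero _

theorem coeffM_add (a b : Fin m → MvPolynomial (Fin n) K) (u : Term n m) :
    coeffM (a + b) u = coeffM a u + coeffM b u :=
  MvPolynomial.coeff_add _ _ _

theorem coeffM_sub (a b : Fin m → MvPolynomial (Fin n) K) (u : Term n m) :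
    coeffM (a - b) u = coeffM a u - coeffM b u :=
  MvPolynomial.coeff_sub _ _ _ _

theorem coeffM_smul (k : K) (a : Fin m → MvPolynomial (Fin n) K) (u : Term n m) :
    coeffM (k • a) u = k * coeffM a u :=
  MvPolynomial.coeff_smul _ _ _

theorem ne_zero_of_coeffM_ne_zero {a : Fin m → MvPolynomial (Fin n) K} {u : Term n m}
    (hu : coeffM a u ≠ 0) : a ≠ 0 := by
  rintro rfl
  exact hu (coeffM_zero u)

theorem exists_coeffM_ne_zero {a : Fin m → MvPolynomial (Fin n) K} (ha : a ≠ 0) :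
    ∃ u, coeffM a u ≠ 0 := by
  obtain ⟨i, hi⟩ := Function.ne_iff.1 ha
  obtain ⟨t, ht⟩ := MvPolynomial.ne_zero_iff.1 hi
  exact ⟨(t, i), ht⟩

theorem finite_setOf_coeffM_ne_zero (a : Fin m → MvPolynomial (Fin n) K) :
    {u | coeffM a u ≠ 0}.Finite := by
  refine (Set.finite_iUnion fun i : Fin m =>
    (a i).support.finite_toSet.image fun t => (t, i)).subset fun u hu => ?_
  exact Set.mem_iUnion.2 ⟨u.2, u.1, MvPolynomial.mem_support_iff.2 hu, rfl⟩

theorem exists_coeffM_ne_zero_of_monomMul {a : Fin m → MvPolynomial (Fin n) K} {c : K} {t : PP n}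
    {v : Term n m} (hv : coeffM (monomMul c t a) v ≠ 0) :
    ∃ u, coeffM a u ≠ 0 ∧ mulTerm t u = v := by
  rw [coeffM, monomMul, MvPolynomial.coeff_monomial_mul'] at hv
  obtain ⟨htv, hv⟩ := ite_ne_right_iff.1 hv
  exact ⟨(v.1 - t, v.2), right_ne_zero_of_mul hv, Prod.ext (add_tsub_cancel_of_le htv) rfl⟩

end Coefficients

section Signature

variable {tle}

theorem strict_of_rel_of_strict {α : Type*} {r : α → α → Prop} [IsTrans α r] [Std.Antisymm r]
    {x y z : α} (hxy : r x y) (hyz : strict r y z) : strict r x z := by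
  refine ⟨_root_.trans hxy hyz.1, ?_⟩
  rintro rfl
  exact hyz.2 (antisymm hyz.1 hxy)

theorem sig_spec [IsTrans (Term n m) tle] [Std.Total tle] {a : Fin m → MvPolynomial (Fin n) K}
    (ha : a ≠ 0) :
    coeffM a (sig tle a) ≠ 0 ∧ ∀ v, coeffM a v ≠ 0 → tle v (sig tle a) := by
  have exists_greatest : ∃ u, coeffM a u ≠ 0 ∧ ∀ v, coeffM a v ≠ 0 → tle v u := by
    let _ : LE (Term n m) := ⟨tle⟩
    have _ : IsTrans (Term n m) (· ≤ ·) := ‹IsTrans (Term n m) tle›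
    obtain ⟨u, hu, hmax⟩ :=
      (finite_setOf_coeffM_ne_zero a).exists_maximal (exists_coeffM_ne_zero ha)
    exact ⟨u, hu, fun v hv => (total_of tle v u).elim id (hmax hv)⟩
  rw [sig, dif_pos exists_greatest]
  exact exists_greatest.choose_spec

theorem tle_sig [IsTrans (Term n m) tle] [Std.Total tle] {a : Fin m → MvPolynomial (Fin n) K}
    {v : Term n m} (hv : coeffM a v ≠ 0) : tle v (sig tle a) :=
  (sig_spec (ne_zero_of_coeffM_ne_zero hv)).2 v hv

theorem sig_eq_of_isGreatest [IsTrans (Term n m) tle] [Std.Total tle] [Std.Antisymm tle]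
    {a : Fin m → MvPolynomial (Fin n) K} {u : Term n m} (hu : coeffM a u ≠ 0)
    (hmax : ∀ v, coeffM a v ≠ 0 → tle v u) : sig tle a = u :=
  antisymm (hmax _ (sig_spec (ne_zero_of_coeffM_ne_zero hu)).1) (tle_sig hu)

variable (tle) in
/-- The module elements all of whose terms are strictly below `u`, that is, `0` and the elements of
signature `≺_t u`. Including `0` makes this a subspace, so that no case distinction is needed when
a reduction step produces `0`, whose signature is a junk value. -/
def sigBelow (u : Term n m) : Submodule K (Fin m → MvPolynomial (Fin n) K) where
  carrier := {a | ∀ v, coeffM a v ≠ 0 → strict tle v u}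
  zero_mem' v hv := absurd (coeffM_zero v) hv
  add_mem' {a b} ha hb v hv := by
    by_cases hav : coeffM a v = 0
    · rw [coeffM_add, hav, zero_add] at hv
      exact hb v hv
    · exact ha v hav
  smul_mem' k a ha v hv := by
    rw [coeffM_smul] at hv
    exact ha v (right_ne_zero_of_mul hv)

theorem strict_sig_of_mem_sigBelow [IsTrans (Term n m) tle] [Std.Total tle] {u : Term n m}
    {a : Fin m → MvPolynomial (Fin n) K} (ha : a ≠ 0) (hau : a ∈ sigBelow tle u) :
    strict tle (sig tle a) u :=
  hau _ (sig_spec ha).1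

omit [NeZero m] in
theorem coeffM_eq_zero_of_mem_sigBelow {u : Term n m} {a : Fin m → MvPolynomial (Fin n) K}
    (ha : a ∈ sigBelow tle u) : coeffM a u = 0 :=
  by_contra fun h => (ha u h).2 rfl

theorem monomMul_mem_sigBelow [IsTrans (Term n m) tle] [Std.Total tle] [Std.Antisymm tle]
    [CovariantClass (PP n) (Term n m) mulTerm tle] {g : Fin m → MvPolynomial (Fin n) K}
    {t : PP n} {u : Term n m} (c : K) (h : strict tle (mulTerm t (sig tle g)) u) :
    monomMul c t g ∈ sigBelow tle u := by
  intro v hv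
  obtain ⟨w, hw, rfl⟩ := exists_coeffM_ne_zero_of_monomMul hv
  exact strict_of_rel_of_strict (CovariantClass.elim t (tle_sig hw)) h

theorem sub_ne_zero_and_sig_sub_eq [IsTrans (Term n m) tle] [Std.Total tle] [Std.Antisymm tle]
    {a b : Fin m → MvPolynomial (Fin n) K} (ha : a ≠ 0) (hb : b ∈ sigBelow tle (sig tle a)) :
    a - b ≠ 0 ∧ sig tle (a - b) = sig tle a := by
  have hcoeff : coeffM (a - b) (sig tle a) ≠ 0 := by
    rw [coeffM_sub, coeffM_eq_zero_of_mem_sigBelow hb, sub_zero]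
    exact (sig_spec ha).1
  refine ⟨ne_zero_of_coeffM_ne_zero hcoeff, sig_eq_of_isGreatest hcoeff fun v hv => ?_⟩
  by_cases hav : coeffM a v = 0
  · rw [coeffM_sub, hav, zero_sub, neg_ne_zero] at hv
    exact (hb v hv).1
  · exact tle_sig hav

theorem exists_sub_smul_mem_sigBelow [IsTrans (Term n m) tle] [Std.Total tle]
    {a z : Fin m → MvPolynomial (Fin n) K} (hz : z ≠ 0) (hsig : sig tle z = sig tle a) :
    ∃ k : K, a - k • z ∈ sigBelow tle (sig tle a) := by
  have hlc : coeffM z (sig tle a) ≠ 0 := hsig ▸ (sig_spec hz).1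
  refine ⟨coeffM a (sig tle a) / coeffM z (sig tle a), fun v hv => ?_⟩
  rw [coeffM_sub, coeffM_smul] at hv
  constructor
  · by_cases hav : coeffM a v = 0
    · rw [hav, zero_sub, neg_ne_zero] at hv
      exact hsig ▸ tle_sig (right_ne_zero_of_mul hv)
    · exact tle_sig hav
  · rintro rfl
    exact hv (by rw [div_mul_cancel₀ _ hlc, sub_self])

end Signature

section Domination

variable {f ple tle} {G : Set (Fin m → MvPolynomial (Fin n) K)}
  {a c d : Fin m → MvPolynomial (Fin n) K}

variable (f tle) in
/-- `a` dominates `c` if both have the same polynomial part and all terms of `c` lie strictly below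
the signature of the nonzero element `a`. This is the invariant under which every s-reduction step
of `c` can be replayed as a regular step of `a`. -/
structure Dominates (a c : Fin m → MvPolynomial (Fin n) K) : Prop where
  ne_zero : a ≠ 0
  bar_eq : bar f a = bar f c
  mem_sigBelow : c ∈ sigBelow tle (sig tle a)

theorem Dominates.exists_regRedStep [IsTrans (Term n m) tle] [Std.Total tle] [Std.Antisymm tle]
    [CovariantClass (PP n) (Term n m) mulTerm tle] (hac : Dominates f tle a c)
    (hcd : SigRedStep f ple tle G c d) :
    ∃ b, RegRedStep f ple tle G a b ∧ Dominates f tle b d := by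
  obtain ⟨g, t, hgG, hg, hcoeff, rfl, hle⟩ := hcd
  have hc : c ≠ 0 := by
    rintro rfl
    exact hcoeff (by rw [bar_zero, MvPolynomial.coeff_zero])
  have hreg : RegularWith tle a g t :=
    strict_of_rel_of_strict hle (strict_sig_of_mem_sigBelow hc hac.mem_sigBelow)
  set s := monomMul (MvPolynomial.coeff (t + lp ple (bar f g)) (bar f c) / lc ple (bar f g)) t g
  have hs : s ∈ sigBelow tle (sig tle a) := monomMul_mem_sigBelow _ hreg
  obtain ⟨hne, hsig⟩ := sub_ne_zero_and_sig_sub_eq hac.ne_zero hs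
  refine ⟨a - s, ⟨g, t, ⟨hgG, hg, ?_, ?_, hreg.1⟩, hreg⟩, hne, ?_, ?_⟩
  · rwa [hac.bar_eq]
  · rw [hac.bar_eq]
  · rw [bar_sub, bar_sub, hac.bar_eq]
  · rw [hsig]
    exact sub_mem hac.mem_sigBelow hs

theorem Dominates.regRedZero [IsTrans (Term n m) tle] [Std.Total tle] [Std.Antisymm tle]
    [CovariantClass (PP n) (Term n m) mulTerm tle] (hac : Dominates f tle a c)
    (hc : SigRedZero f ple tle G c) : RegRedZero f ple tle G a := by
  obtain ⟨d, hcd, hd⟩ := hc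
  induction hcd using Relation.ReflTransGen.head_induction_on generalizing a with
  | refl => exact ⟨a, .refl, hac.bar_eq.trans hd⟩
  | head hstep _ ih =>
    obtain ⟨a', haa', hdom⟩ := hac.exists_regRedStep hstep
    obtain ⟨b, hab, hb⟩ := ih hdom
    exact ⟨b, .head haa' hab, hb⟩

theorem IsSyzSig.exists_dominates [IsTrans (Term n m) tle] [Std.Total tle] (ha : a ≠ 0)
    (hsyz : IsSyzSig f tle (sig tle a)) : ∃ c, Dominates f tle a c := by
  obtain ⟨z, hz, hsig, hbar⟩ := hsyz
  obtain ⟨k, hk⟩ := exists_sub_smul_mem_sigBelow hz hsig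
  exact ⟨a - k • z, ha, by rw [bar_sub, bar_smul, hbar, smul_zero, sub_zero], hk⟩

theorem IsSigGBUpto.sigRedZero_of_mem_sigBelow [IsTrans (Term n m) tle] [Std.Total tle]
    {u : Term n m} (hGB : IsSigGBUpto f ple tle G u) (hc : c ∈ sigBelow tle u) :
    SigRedZero f ple tle G c := by
  rcases eq_or_ne c 0 with rfl | hc0
  · exact ⟨0, .refl, bar_zero f⟩
  · exact hGB _ (strict_sig_of_mem_sigBelow hc0 hc) c hc0 rfl

end Domination

theorem syzygy_criterion_general [IsLinearOrder (PP n) ple] [IsLinearOrder (Term n m) tle]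
    [CovariantClass (PP n) (Term n m) mulTerm tle] (G : Set (Fin m → MvPolynomial (Fin n) K))
    (a : Fin m → MvPolynomial (Fin n) K) (ha : a ≠ 0)
    (hGB : IsSigGBUpto f ple tle G (sig tle a)) (hsyz : IsSyzSig f tle (sig tle a)) :
    RegRedZero f ple tle G a := by
  obtain ⟨c, hac⟩ := hsyz.exists_dominates ha
  exact hac.regRedZero (hGB.sigRedZero_of_mem_sigBelow hac.mem_sigBelow)

/-- syzygy criterion: if `𝔰(a)` is a syzygy signature and `G` is a
signature Gröbner basis up to `𝔰(a)`, then `a` regular s-reduces to zero modulo `G`. -/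
theorem syzygy_criterion (hord : OrdersOK ple tle)
    (G : Set (Fin m → MvPolynomial (Fin n) K))
    (a : Fin m → MvPolynomial (Fin n) K) (ha : a ≠ 0)
    (hGB : IsSigGBUpto f ple tle G (sig tle a))
    (hsyz : IsSyzSig f tle (sig tle a)) :
    RegRedZero f ple tle G a := by
  have := hord.isLinearOrder_ple
  have := hord.isLinearOrder_tle
  have := hord.covariantClass_mulTerm
  exact syzygy_criterion_general f ple tle G a ha hGB hsyz

end

end SigGB
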